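/- Let n ≥ 1, −1/n < α < 0, κ = α/(1 + nα), 0 < λ < 1, and let f, g ∈ C_α(ℝⁿ) be Lebesgue integrable with ∫f > 0 and ∫g > 0. Define h(x) = sup_{y+z=x} [λ·f(y/λ)^α + (1−λ)·g(z/(1−λ))^α]^{1/α} (conventions 0^α = +∞ and (+∞)^{1/α} = 0). Then ∫_{ℝⁿ} h(x) dx ≥ [λ·(∫f)^κ + (1−λ)·(∫g)^κ]^{1/κ} (note κ < 0). -/

import Mathlib

open scoped RealInnerProductSpace Topology ENNReal
open MeasureTheory Filter

noncomputable section

/-- `f : ℝⁿ → [0,∞)` is `α`-concave: its support is convex and `f` satisfies the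
`α`-mean inequality on its support. -/
def AlphaConcave (n : ℕ) (α : ℝ) (f : EuclideanSpace ℝ (Fin n) → ℝ) : Prop :=
  Convex ℝ {x | f x ≠ 0} ∧
  ∀ x y : EuclideanSpace ℝ (Fin n), f x ≠ 0 → f y ≠ 0 → ∀ l : ℝ, 0 ≤ l → l ≤ 1 →
    (l * f x ^ α + (1 - l) * f y ^ α) ^ (1 / α) ≤ f (l • x + (1 - l) • y)

/-- `C_α(ℝⁿ)`: upper semicontinuous `α`-concave functions `f : ℝⁿ → [0,∞)`
with `f` not identically `0`. -/
def CAlpha (n : ℕ) (α : ℝ) : Set (EuclideanSpace ℝ (Fin n) → ℝ) :=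
  {f | (∀ x, 0 ≤ f x) ∧ UpperSemicontinuous f ∧ (∃ x, f x ≠ 0) ∧ AlphaConcave n α f}

/-- The convex base `base_α f = (1 - f^α)/α = β·(f^{-1/β} - 1)` (with `α = -1/β`),
taking the value `∞` where `f = 0`. -/
def convexBase {n : ℕ} (β : ℝ) (f : EuclideanSpace ℝ (Fin n) → ℝ) :
    EuclideanSpace ℝ (Fin n) → EReal :=
  fun x => if f x = 0 then ⊤ else ((β * (f x ^ (-1 / β) - 1) : ℝ) : EReal)

/-- The `α`-concave function with the given convex base: `f = (1 + φ/β)^{-β}`. -/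
def ofBase {n : ℕ} (β : ℝ) (φ : EuclideanSpace ℝ (Fin n) → EReal) :
    EuclideanSpace ℝ (Fin n) → ℝ :=
  fun x => if φ x = ⊤ then 0 else (1 + (φ x).toReal / β) ^ (-β)

/-- Inf-convolution: `(φ □ ψ)(x) = inf_{y+z=x} [φ(y) + ψ(z)]`. -/
def infConv {n : ℕ} (φ ψ : EuclideanSpace ℝ (Fin n) → EReal) :
    EuclideanSpace ℝ (Fin n) → EReal :=
  fun x => ⨅ y : EuclideanSpace ℝ (Fin n), φ y + ψ (x - y)

/-- The base of the `λ`-homothety: `x ↦ λ·φ(x/λ)`. -/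
def scaleBase {n : ℕ} (l : ℝ) (φ : EuclideanSpace ℝ (Fin n) → EReal) :
    EuclideanSpace ℝ (Fin n) → EReal :=
  fun x => (l : EReal) * φ (l⁻¹ • x)

/-- `base_α G_α`, i.e. the function `x ↦ |x|²/2`. -/
def gaussBase (n : ℕ) : EuclideanSpace ℝ (Fin n) → EReal :=
  fun x => ((‖x‖ ^ 2 / 2 : ℝ) : EReal)

/-- The Legendre transform `φ*(y) = sup_x (⟨x,y⟩ - φ(x))`. -/
def legendre {n : ℕ} (φ : EuclideanSpace ℝ (Fin n) → EReal) :
    EuclideanSpace ℝ (Fin n) → EReal :=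
  fun y => ⨆ x : EuclideanSpace ℝ (Fin n), (((⟪x, y⟫ : ℝ) : EReal) - φ x)

/-- The `α`-mean `[l·u^α + (1-l)·v^α]^{1/α}` with the conventions `0^α = +∞`,
`(+∞)^{1/α} = 0` (for `α < 0`). -/
def alphaMean (α l u v : ℝ) : ℝ :=
  if u = 0 ∨ v = 0 then 0 else (l * u ^ α + (1 - l) * v ^ α) ^ (1 / α)

namespace BBL

lemma holder2 {a b x1 x2 y1 y2 θ : ℝ} (ha : 0 < a) (hb : 0 < b) (hx1 : 0 < x1) (hx2 : 0 < x2)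
    (hy1 : 0 < y1) (hy2 : 0 < y2) (h0 : 0 < θ) (h1 : θ < 1) :
    a * (x1 ^ θ * y1 ^ (1 - θ)) + b * (x2 ^ θ * y2 ^ (1 - θ)) ≤
      (a * x1 + b * x2) ^ θ * (a * y1 + b * y2) ^ (1 - θ) := by
  set T := a * x1 + b * x2 with hT
  set X := a * y1 + b * y2 with hX
  have hT0 : 0 < T := by positivity
  have hX0 : 0 < X := by positivity
  have key : ∀ x y : ℝ, 0 < x → 0 < y →
      x ^ θ * y ^ (1 - θ) ≤ (θ * (x / T) + (1 - θ) * (y / X)) * (T ^ θ * X ^ (1 - θ)) := by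
    intro x y hx hy
    have := Real.geom_mean_le_arith_mean2_weighted h0.le (by linarith : 0 ≤ 1 - θ)
      (by positivity : 0 ≤ x / T) (by positivity : 0 ≤ y / X) (by ring)
    rw [Real.div_rpow hx.le hT0.le, Real.div_rpow hy.le hX0.le, div_mul_div_comm,
      div_le_iff₀ (by positivity)] at this
    exact this
  have k1 := mul_le_mul_of_nonneg_left (key x1 y1 hx1 hy1) ha.le
  have k2 := mul_le_mul_of_nonneg_left (key x2 y2 hx2 hy2) hb.le
  refine (add_le_add k1 k2).trans (le_of_eq ?_)
  have : a * (θ * (x1 / T) + (1 - θ) * (y1 / X)) + b * (θ * (x2 / T) + (1 - θ) * (y2 / X)) = 1 := by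
    have e1 : a * (θ * (x1 / T) + (1 - θ) * (y1 / X)) + b * (θ * (x2 / T) + (1 - θ) * (y2 / X))
      = θ * (T / T) + (1 - θ) * (X / X) := by
      rw [hT, hX]; ring
    rw [e1, div_self hT0.ne', div_self hX0.ne']; ring
  linear_combination (T ^ θ * X ^ (1 - θ)) * this

lemma meanR {a b A B u v q s : ℝ} (ha : 0 < a) (hb : 0 < b) (hA : 0 < A) (hB : 0 < B)
    (hu : 0 < u) (hv : 0 < v) (h0 : -1 < q) (h1 : q < 0) (hs : s = q / (1 + q)) :
    (a * (A * u) ^ s + b * (B * v) ^ s) ^ (1 / s) ≤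
      (a * A ^ q + b * B ^ q) ^ (1 / q) * (a * u + b * v) := by
  have h1q : 0 < 1 + q := by linarith
  have hsq : s * (1 + q) = q := by rw [hs]; field_simp
  have e : ∀ A u : ℝ, 0 < A → 0 < u → ((A * u) ^ s) ^ (1 + q) * u ^ (1 - (1 + q)) = A ^ q := by
    intro A u hA hu
    rw [← Real.rpow_mul (by positivity), hsq, Real.mul_rpow hA.le hu.le, mul_assoc,
      ← Real.rpow_add hu]
    simp
  have H := holder2 ha hb (Real.rpow_pos_of_pos (mul_pos hA hu) s)
    (Real.rpow_pos_of_pos (mul_pos hB hv) s) hu hv h1q (by linarith)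
  rw [e A u hA hu, e B v hB hv] at H
  set T := a * (A * u) ^ s + b * (B * v) ^ s
  set X := a * u + b * v
  set S := a * A ^ q + b * B ^ q
  have hT0 : 0 < T := by positivity
  have hX0 : 0 < X := by positivity
  have hS0 : 0 < S := by positivity
  have H2 := Real.rpow_le_rpow_of_nonpos hS0 H (by rw [one_div]; exact inv_nonpos.2 h1.le : 1 / q ≤ 0)
  rw [Real.mul_rpow (by positivity) (by positivity), ← Real.rpow_mul hT0.le,
    ← Real.rpow_mul hX0.le] at H2
  have e1 : (1 + q) * (1 / q) = 1 / s := by rw [hs, one_div_div]; ring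
  have e2 : (1 - (1 + q)) * (1 / q) = -1 := by
    have := h1.ne
    field_simp
    ring
  rw [e1, e2, Real.rpow_neg_one] at H2
  calc T ^ (1 / s) = T ^ (1 / s) * X⁻¹ * X := by field_simp
    _ ≤ _ := by gcongr

/-- weighted power mean in `ℝ≥0∞` -/
def M (a b : ℝ) (p : ℝ) (u v : ℝ≥0∞) : ℝ≥0∞ :=
  (ENNReal.ofReal a * u ^ p + ENNReal.ofReal b * v ^ p) ^ (1 / p)

lemma rpow_anti {p : ℝ} (hp : p < 0) {x y : ℝ≥0∞} (h : x ≤ y) : y ^ p ≤ x ^ p := by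
  have e : ∀ z : ℝ≥0∞, z ^ p = (z ^ (-p))⁻¹ := fun z => by rw [← ENNReal.rpow_neg, neg_neg]
  rw [e, e]
  exact ENNReal.inv_le_inv.2 (ENNReal.rpow_le_rpow h (by linarith))

lemma M_mono {a b p : ℝ} (hp : p < 0) {u v u' v' : ℝ≥0∞} (hu : u ≤ u') (hv : v ≤ v') :
    M a b p u v ≤ M a b p u' v' := by
  unfold M
  apply rpow_anti (by rw [one_div]; exact inv_lt_zero.2 hp)
  have := rpow_anti hp hu
  have := rpow_anti hp hv
  gcongr

lemma M_cont (a b p : ℝ) : Continuous fun z : ℝ≥0∞ × ℝ≥0∞ => M a b p z.1 z.2 := by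
  unfold M
  refine ENNReal.continuous_rpow_const.comp ?_
  exact ((ENNReal.continuous_const_mul ENNReal.ofReal_ne_top).comp
      (ENNReal.continuous_rpow_const.comp continuous_fst)).add
    ((ENNReal.continuous_const_mul ENNReal.ofReal_ne_top).comp
      (ENNReal.continuous_rpow_const.comp continuous_snd))

lemma M_zero_left {a b p : ℝ} (ha : 0 < a) (hp : p < 0) (v : ℝ≥0∞) : M a b p 0 v = 0 := by
  unfold M
  rw [ENNReal.zero_rpow_of_neg hp, ENNReal.mul_top (by simpa using ha), top_add,
    ENNReal.top_rpow_of_neg (by rw [one_div]; exact inv_lt_zero.2 hp)]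

lemma M_zero_right {a b p : ℝ} (hb : 0 < b) (hp : p < 0) (v : ℝ≥0∞) : M a b p v 0 = 0 := by
  unfold M
  rw [ENNReal.zero_rpow_of_neg hp, ENNReal.mul_top (by simpa using hb), add_top,
    ENNReal.top_rpow_of_neg (by rw [one_div]; exact inv_lt_zero.2 hp)]

lemma M_ofReal {a b p u v : ℝ} (ha : 0 < a) (hb : 0 < b) (hu : 0 < u) (hv : 0 < v) :
    M a b p (ENNReal.ofReal u) (ENNReal.ofReal v) =
      ENNReal.ofReal ((a * u ^ p + b * v ^ p) ^ (1 / p)) := by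
  unfold M
  rw [ENNReal.ofReal_rpow_of_pos hu, ENNReal.ofReal_rpow_of_pos hv, ← ENNReal.ofReal_mul ha.le,
    ← ENNReal.ofReal_mul hb.le, ← ENNReal.ofReal_add (by positivity) (by positivity),
    ENNReal.ofReal_rpow_of_pos (by positivity)]

/-- one dimensional Brunn-Minkowski -/
lemma bm_compact {K L : Set ℝ} (hK : IsCompact K) (hL : IsCompact L) (hKn : K.Nonempty)
    (hLn : L.Nonempty) {C : Set ℝ} (hC : ∀ x ∈ K, ∀ y ∈ L, x + y ∈ C) :
    volume K + volume L ≤ volume C := by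
  obtain ⟨k, hk, hkm⟩ := hK.exists_isGreatest hKn
  obtain ⟨m, hm, hmm⟩ := hL.exists_isLeast hLn
  have h1 : volume ((fun x => x + m) '' K) = volume K := by
    simp
  have h2 : volume ((fun x => k + x) '' L) = volume L := by
    simp
  rw [← h1, ← h2, ← measure_union₀]
  · apply measure_mono
    rintro x (⟨y, hy, rfl⟩ | ⟨y, hy, rfl⟩)
    · exact hC _ hy _ hm
    · exact hC _ hk _ hy
  · exact ((hL.image (continuous_const_add k)).measurableSet).nullMeasurableSet
  · refine measure_mono_null (t := {k + m}) ?_ (by simp)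
    rintro x ⟨⟨y, hy, rfl⟩, ⟨z, hz, hzz⟩⟩
    have := hkm hy
    have := hmm hz
    simp only at hzz
    simp only [Set.mem_singleton_iff]
    linarith

lemma bm1 {A B C : Set ℝ} (hA : MeasurableSet A) (hB : MeasurableSet B) (hAn : A.Nonempty)
    (hBn : B.Nonempty) (hC : ∀ x ∈ A, ∀ y ∈ B, x + y ∈ C) :
    volume A + volume B ≤ volume C := by
  obtain ⟨x0, hx0⟩ := hAn
  obtain ⟨y0, hy0⟩ := hBn
  rw [hA.measure_eq_iSup_isCompact volume, hB.measure_eq_iSup_isCompact volume]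
  simp only [iSup_and']
  refine ENNReal.biSup_add_biSup_le' ⟨∅, by simp⟩ ⟨∅, by simp⟩ ?_
  rintro K ⟨hKA, hK⟩ L ⟨hLB, hL⟩
  calc volume K + volume L ≤ volume (insert x0 K) + volume (insert y0 L) := by
        gcongr <;> exact Set.subset_insert _ _
    _ ≤ volume C := by
        apply bm_compact (hK.insert x0) (hL.insert y0) (Set.insert_nonempty _ _)
          (Set.insert_nonempty _ _)
        intro x hx y hy
        exact hC x (Set.insert_subset hx0 hKA hx) y (Set.insert_subset hy0 hLB hy)

end BBL
namespace BBL
open Pointwise in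
lemma core {a b : ℝ} (ha : 0 < a) (hb : 0 < b) {f g : ℝ → ℝ} (hf : Measurable f)
    (hg : Measurable g) (f0 : ∀ x, 0 ≤ f x) (g0 : ∀ x, 0 ≤ g x) (f1 : ∀ x, f x ≤ 1)
    (g1 : ∀ x, g x ≤ 1) (fs : ∀ t < 1, ∃ x, t < f x) (gs : ∀ t < 1, ∃ x, t < g x)
    {h : ℝ → ℝ≥0∞} (hh : Measurable h)
    (H : ∀ t : ℝ, 0 < t → t < 1 → ∀ x y, t < f x → t < g y → ENNReal.ofReal t ≤ h (a * x + b * y)) :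
    ENNReal.ofReal a * (∫⁻ x, ENNReal.ofReal (f x)) + ENNReal.ofReal b * ∫⁻ x, ENNReal.ofReal (g x)
      ≤ ∫⁻ x, h x := by
  have hm : Measurable fun x => (min (h x) 1).toReal := (hh.min measurable_const).ennreal_toReal
  have step : ∫⁻ x, ENNReal.ofReal ((min (h x) 1).toReal) ≤ ∫⁻ x, h x := by
    apply lintegral_mono
    intro x
    refine ENNReal.ofReal_toReal_le.trans (min_le_left _ _)
  refine le_trans ?_ step
  rw [lintegral_eq_lintegral_meas_lt volume (Eventually.of_forall f0) hf.aemeasurable,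
    lintegral_eq_lintegral_meas_lt volume (Eventually.of_forall g0) hg.aemeasurable,
    lintegral_eq_lintegral_meas_le volume (Eventually.of_forall fun _ => ENNReal.toReal_nonneg)
      hm.aemeasurable]
  have mf : Measurable fun t : ℝ => volume {x | t < f x} := by
    apply Antitone.measurable
    intro s t hst
    exact measure_mono fun x hx => lt_of_le_of_lt hst hx
  rw [← lintegral_const_mul' _ _ ENNReal.ofReal_ne_top, ← lintegral_const_mul' _ _ ENNReal.ofReal_ne_top,
    ← lintegral_add_left (mf.const_mul _)]
  apply setLIntegral_mono' measurableSet_Ioi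
  intro t ht
  have ht0 : 0 < t := ht
  by_cases ht1 : t < 1
  · have e1 : volume (a • {x | t < f x}) = ENNReal.ofReal a * volume {x | t < f x} := by
      rw [Measure.addHaar_smul]; simp [abs_of_pos ha]
    have e2 : volume (b • {x | t < g x}) = ENNReal.ofReal b * volume {x | t < g x} := by
      rw [Measure.addHaar_smul]; simp [abs_of_pos hb]
    rw [← e1, ← e2]
    apply bm1
    · exact (measurableSet_lt measurable_const hf).const_smul₀ a
    · exact (measurableSet_lt measurable_const hg).const_smul₀ b
    · exact (show {x | t < f x}.Nonempty from fs t ht1).smul_set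
    · exact (show {x | t < g x}.Nonempty from gs t ht1).smul_set
    · rintro _ ⟨x, hx, rfl⟩ _ ⟨y, hy, rfl⟩
      have := H t ht0 ht1 x y hx hy
      simp only [smul_eq_mul, Set.mem_ofPred_eq]
      rw [← ENNReal.ofReal_le_iff_le_toReal (ne_top_of_le_ne_top ENNReal.one_ne_top (min_le_right _ _))]
      refine le_min this ?_
      rw [← ENNReal.ofReal_one]
      exact ENNReal.ofReal_le_ofReal ht1.le
  · have e1 : {x | t < f x} = ∅ := by
      ext x; simp; linarith [f1 x, not_lt.1 ht1]
    have e2 : {x | t < g x} = ∅ := by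
      ext x; simp; linarith [g1 x, not_lt.1 ht1]
    simp [e1, e2]

lemma one_dim_bdd {a b q : ℝ} (ha : 0 < a) (hb : 0 < b) (h0 : -1 < q) (h1 : q < 0)
    {f g h : ℝ → ℝ≥0∞} (hf : Measurable f) (hg : Measurable g) (hh : Measurable h)
    (fb : (⨆ x, f x) ≠ ⊤) (gb : (⨆ x, g x) ≠ ⊤)
    (H : ∀ x y, M a b q (f x) (g y) ≤ h (a * x + b * y)) :
    M a b (q / (1 + q)) (∫⁻ x, f x) (∫⁻ x, g x) ≤ ∫⁻ x, h x := by
  have hs : q / (1 + q) < 0 := div_neg_of_neg_of_pos h1 (by linarith)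
  by_cases fz : ∫⁻ x, f x = 0
  · rw [fz, M_zero_left ha hs]; exact zero_le
  by_cases gz : ∫⁻ x, g x = 0
  · rw [gz, M_zero_right hb hs]; exact zero_le
  have norm : ∀ f : ℝ → ℝ≥0∞, Measurable f → (⨆ x, f x) ≠ ⊤ → ∫⁻ x, f x ≠ 0 →
      ∃ (A : ℝ) (F : ℝ → ℝ), 0 < A ∧ Measurable F ∧ (∀ x, 0 ≤ F x) ∧ (∀ x, F x ≤ 1) ∧
        (∀ t < 1, ∃ x, t < F x) ∧ (∀ x, f x = ENNReal.ofReal A * ENNReal.ofReal (F x)) := by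
    intro f hf fb fz
    have s0 : (⨆ x, f x) ≠ 0 := by
      intro hz
      apply fz
      rw [ENNReal.iSup_eq_zero] at hz
      simp [hz]
    have hA : 0 < (⨆ x, f x).toReal := ENNReal.toReal_pos s0 fb
    have fle : ∀ x, f x ≤ ⨆ x, f x := le_iSup f
    have ft : ∀ x, f x ≠ ⊤ := fun x => ne_top_of_le_ne_top fb (fle x)
    refine ⟨(⨆ x, f x).toReal, fun x => (f x).toReal / (⨆ x, f x).toReal, hA,
      hf.ennreal_toReal.div_const _, fun x => by positivity, fun x => ?_, fun t ht => ?_, fun x => ?_⟩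
    · rw [div_le_one hA]
      exact ENNReal.toReal_mono fb (fle x)
    · have : ENNReal.ofReal (t * (⨆ x, f x).toReal) < ⨆ x, f x := by
        rw [← ENNReal.ofReal_toReal fb, ENNReal.ofReal_lt_ofReal_iff hA,
          ENNReal.toReal_ofReal hA.le]
        nlinarith
      obtain ⟨x, hx⟩ := lt_iSup_iff.1 this
      refine ⟨x, ?_⟩
      rw [lt_div_iff₀ hA]
      rw [← ENNReal.ofReal_toReal (ft x)] at hx
      exact lt_of_not_ge fun hge => absurd hx (not_lt.2 (ENNReal.ofReal_le_ofReal hge))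
    · rw [← ENNReal.ofReal_mul hA.le, mul_div_cancel₀ _ hA.ne', ENNReal.ofReal_toReal (ft x)]
  obtain ⟨A, F, hA, mF, F0, F1, Fs, eF⟩ := norm f hf fb fz
  obtain ⟨B, G, hB, mG, G0, G1, Gs, eG⟩ := norm g hg gb gz
  set m : ℝ := (a * A ^ q + b * B ^ q) ^ (1 / q) with hm
  have m0 : 0 < m := by positivity
  have C := core ha hb mF mG F0 G0 F1 G1 Fs Gs (h := fun x => (ENNReal.ofReal m)⁻¹ * h x)
    (hh.const_mul _) (by
      intro t t0 t1 x y hx hy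
      have := H x y
      rw [eF, eG] at this
      have h2 : M a b q (ENNReal.ofReal (A * t)) (ENNReal.ofReal (B * t)) ≤ h (a * x + b * y) := by
        refine le_trans (M_mono h1 ?_ ?_) this
        · rw [ENNReal.ofReal_mul hA.le]; gcongr
        · rw [ENNReal.ofReal_mul hB.le]; gcongr
      rw [M_ofReal ha hb (by positivity) (by positivity), Real.mul_rpow hA.le t0.le,
        Real.mul_rpow hB.le t0.le, ← mul_assoc, ← mul_assoc, ← add_mul,
        Real.mul_rpow (by positivity) (by positivity), ← Real.rpow_mul t0.le,
        mul_one_div_cancel h1.ne, Real.rpow_one, ← hm, ENNReal.ofReal_mul m0.le] at h2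
      calc ENNReal.ofReal t = (ENNReal.ofReal m)⁻¹ * (ENNReal.ofReal m * ENNReal.ofReal t) := by
            rw [← mul_assoc, ENNReal.inv_mul_cancel (by simpa using m0) ENNReal.ofReal_ne_top, one_mul]
        _ ≤ _ := by gcongr)
  rw [lintegral_const_mul _ hh] at C
  have C2 : ENNReal.ofReal m * (ENNReal.ofReal a * (∫⁻ x, ENNReal.ofReal (F x)) +
      ENNReal.ofReal b * ∫⁻ x, ENNReal.ofReal (G x)) ≤ ∫⁻ x, h x := by
    refine (mul_le_mul_right C (ENNReal.ofReal m)).trans ?_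
    rw [← mul_assoc, ENNReal.mul_inv_cancel (by simpa using m0) ENNReal.ofReal_ne_top, one_mul]
  refine le_trans ?_ C2
  have iF : ∫⁻ x, f x = ENNReal.ofReal A * ∫⁻ x, ENNReal.ofReal (F x) := by
    simp_rw [eF]; rw [lintegral_const_mul _ mF.ennreal_ofReal]
  have iG : ∫⁻ x, g x = ENNReal.ofReal B * ∫⁻ x, ENNReal.ofReal (G x) := by
    simp_rw [eG]; rw [lintegral_const_mul _ mG.ennreal_ofReal]
  rw [iF] at fz ⊢
  rw [iG] at gz ⊢
  set u := ∫⁻ x, ENNReal.ofReal (F x)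
  set v := ∫⁻ x, ENNReal.ofReal (G x)
  have ma : ENNReal.ofReal m ≠ 0 := by simpa using m0
  by_cases ut : u = ⊤
  · rw [ut, ENNReal.mul_top (a := ENNReal.ofReal a) (by simpa using ha), top_add, ENNReal.mul_top ma]; exact le_top
  by_cases vt : v = ⊤
  · rw [vt, ENNReal.mul_top (a := ENNReal.ofReal b) (by simpa using hb), add_top, ENNReal.mul_top ma]; exact le_top
  have u0 : 0 < u.toReal := ENNReal.toReal_pos (right_ne_zero_of_mul fz) ut
  have v0 : 0 < v.toReal := ENNReal.toReal_pos (right_ne_zero_of_mul gz) vt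
  rw [← ENNReal.ofReal_toReal ut, ← ENNReal.ofReal_toReal vt, ← ENNReal.ofReal_mul hA.le,
    ← ENNReal.ofReal_mul hB.le, M_ofReal ha hb (by positivity) (by positivity),
    ← ENNReal.ofReal_mul ha.le, ← ENNReal.ofReal_mul hb.le,
    ← ENNReal.ofReal_add (by positivity) (by positivity), ← ENNReal.ofReal_mul m0.le]
  exact ENNReal.ofReal_le_ofReal (meanR ha hb hA hB u0 v0 h0 h1 rfl)

lemma one_dim {a b q : ℝ} (ha : 0 < a) (hb : 0 < b) (h0 : -1 < q) (h1 : q < 0)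
    {f g h : ℝ → ℝ≥0∞} (hf : Measurable f) (hg : Measurable g) (hh : Measurable h)
    (H : ∀ x y, M a b q (f x) (g y) ≤ h (a * x + b * y)) :
    M a b (q / (1 + q)) (∫⁻ x, f x) (∫⁻ x, g x) ≤ ∫⁻ x, h x := by
  have lim : ∀ f : ℝ → ℝ≥0∞, Measurable f →
      Tendsto (fun N : ℕ => ∫⁻ x, min (f x) N) atTop (𝓝 (∫⁻ x, f x)) := by
    intro f hf
    apply lintegral_tendsto_of_tendsto_of_monotone
    · exact fun N => (hf.min measurable_const).aemeasurable
    · refine Eventually.of_forall fun x i j hij => ?_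
      have : (i : ℝ≥0∞) ≤ j := by exact_mod_cast hij
      exact min_le_min le_rfl this
    · refine Eventually.of_forall fun x => ?_
      have := (tendsto_const_nhds (x := f x)).min ENNReal.tendsto_nat_nhds_top
      simpa using this
  have L := ((M_cont a b (q / (1 + q))).tendsto _).comp ((lim f hf).prodMk_nhds (lim g hg))
  refine le_of_tendsto' L fun N => ?_
  have bd : ∀ f : ℝ → ℝ≥0∞, (⨆ x, min (f x) (N : ℝ≥0∞)) ≠ ⊤ := fun f =>
    ne_top_of_le_ne_top (ENNReal.natCast_ne_top N) (iSup_le fun x => min_le_right _ _)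
  exact one_dim_bdd ha hb h0 h1 (hf.min measurable_const) (hg.min measurable_const) hh
    (bd f) (bd g) fun x y => (M_mono h1 (min_le_left _ _) (min_le_left _ _)).trans (H x y)

lemma bbl {a b : ℝ} (ha : 0 < a) (hb : 0 < b) (n : ℕ) : ∀ p : ℝ, 0 < 1 + n * p → p < 0 →
    ∀ f g h : (Fin n → ℝ) → ℝ≥0∞, Measurable f → Measurable g → Measurable h →
    (∀ x y, M a b p (f x) (g y) ≤ h (a • x + b • y)) →
    M a b (p / (1 + n * p)) (∫⁻ x, f x) (∫⁻ x, g x) ≤ ∫⁻ x, h x := by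
  induction n with
  | zero =>
    intro p _ hp f g h hf hg hh H
    have e : ∀ f : (Fin 0 → ℝ) → ℝ≥0∞, ∫⁻ x, f x = f 0 := by
      intro f
      rw [lintegral_unique]
      simp [Measure.volume_pi_eq_dirac (0 : Fin 0 → ℝ)]
      congr 1
    rw [e, e, e]
    have := H 0 0
    simpa using this
  | succ n ih =>
    intro p hp1 hp f g h hf hg hh H
    have hn : 0 < 1 + n * p := by push_cast at hp1; nlinarith
    have e : ∀ f : (Fin (n + 1) → ℝ) → ℝ≥0∞, Measurable f →
        ∫⁻ x, f x = ∫⁻ t : ℝ, ∫⁻ x : Fin n → ℝ, f (Fin.cons t x) ∧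
        Measurable (fun z : ℝ × (Fin n → ℝ) => f (Fin.cons z.1 z.2)) := by
      intro f hf
      have mp := (volume_preserving_piFinSuccAbove (fun _ : Fin (n + 1) => ℝ) 0).symm
      have e2 : ∀ z, (MeasurableEquiv.piFinSuccAbove (fun _ : Fin (n + 1) => ℝ) 0).symm z =
        Fin.cons z.1 z.2 := by
        intro z
        ext i
        refine Fin.cases ?_ (fun j => ?_) i <;> simp [MeasurableEquiv.piFinSuccAbove]
      have mm := hf.comp mp.measurable
      have e3 : (fun z : ℝ × (Fin n → ℝ) => f (Fin.cons z.1 z.2)) =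
        f ∘ (MeasurableEquiv.piFinSuccAbove (fun _ : Fin (n + 1) => ℝ) 0).symm := by
        ext z; rw [Function.comp, e2]
      refine ⟨?_, e3 ▸ mm⟩
      rw [← mp.lintegral_comp hf, Measure.volume_eq_prod]
      simp only [e2]
      exact lintegral_prod _ (e3 ▸ mm).aemeasurable
    obtain ⟨ef, mf⟩ := e f hf
    obtain ⟨eg, mg⟩ := e g hg
    obtain ⟨eh, mh⟩ := e h hh
    rw [ef, eg, eh]
    have q0 : p / (1 + n * p) < 0 := div_neg_of_neg_of_pos hp hn
    have e1q : 1 + p / (1 + n * p) = (1 + (n + 1 : ℕ) * p) / (1 + n * p) := by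
      rw [eq_div_iff hn.ne', add_mul, div_mul_cancel₀ _ hn.ne']; push_cast; ring
    have q1 : -1 < p / (1 + n * p) := by
      have : 0 < 1 + p / (1 + n * p) := by rw [e1q]; positivity
      linarith
    have := one_dim ha hb q1 q0 mf.lintegral_prod_right' mg.lintegral_prod_right'
      mh.lintegral_prod_right' (by
        intro s t
        refine ih p hn hp _ _ _ (mf.comp measurable_prodMk_left) (mg.comp measurable_prodMk_left)
          (mh.comp measurable_prodMk_left) ?_
        intro x y
        refine (H (Fin.cons s x) (Fin.cons t y)).trans (le_of_eq ?_)
        congr 1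
        ext i
        refine Fin.cases ?_ (fun j => ?_) i <;> simp)
    rw [e1q, div_div_div_cancel_right₀ hn.ne'] at this
    exact this

end BBL
namespace BBL

lemma convexOn_pow {n : ℕ} {α : ℝ} (hα : α < 0) {f : EuclideanSpace ℝ (Fin n) → ℝ}
    (f0 : ∀ x, 0 ≤ f x) (hf : AlphaConcave n α f) :
    ConvexOn ℝ {x | f x ≠ 0} (fun x => f x ^ α) := by
  refine ⟨hf.1, ?_⟩
  intro x hx y hy a b ha hb hab
  have px : 0 < f x := lt_of_le_of_ne (f0 x) (Ne.symm hx)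
  have py : 0 < f y := lt_of_le_of_ne (f0 y) (Ne.symm hy)
  have h := hf.2 x y hx hy a ha (by linarith)
  have hb' : 1 - a = b := by linarith
  rw [hb'] at h
  have S0 : 0 < a * f x ^ α + b * f y ^ α := by
    have := Real.rpow_pos_of_pos px α
    have := Real.rpow_pos_of_pos py α
    rcases ha.eq_or_lt with h0 | h0
    · have : b = 1 := by linarith
      rw [← h0, this]; simpa
    · positivity
  have := Real.rpow_le_rpow_of_nonpos (Real.rpow_pos_of_pos S0 _) h hα.le
  rwa [← Real.rpow_mul S0.le, one_div_mul_cancel hα.ne, Real.rpow_one] at this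

lemma contOn {n : ℕ} {α : ℝ} (hα : α < 0) {f : EuclideanSpace ℝ (Fin n) → ℝ}
    (f0 : ∀ x, 0 ≤ f x) (hf : AlphaConcave n α f) :
    ContinuousOn f (interior {x | f x ≠ 0}) := by
  have h := (convexOn_pow hα f0 hf).continuousOn_interior
  have h2 : ContinuousOn (fun x => (f x ^ α) ^ (1 / α)) (interior {x | f x ≠ 0}) := by
    apply h.rpow_const
    intro x hx
    have hx : f x ≠ 0 := interior_subset hx
    exact Or.inl (Real.rpow_pos_of_pos (lt_of_le_of_ne (f0 x) (Ne.symm hx)) _).ne'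
  refine h2.congr fun x _ => ?_
  simp only
  rw [← Real.rpow_mul (f0 x), mul_one_div_cancel hα.ne, Real.rpow_one]

lemma bounded_of_finite {n : ℕ} {K : Set (EuclideanSpace ℝ (Fin n))} (hK : Convex ℝ K)
    {x0 : EuclideanSpace ℝ (Fin n)} {r : ℝ} (hr : 0 < r) (hb : Metric.ball x0 r ⊆ K)
    (hv : volume K ≠ ⊤) : Bornology.IsBounded K := by
  set v := volume (Metric.ball (0 : EuclideanSpace ℝ (Fin n)) (r / 2)) with hvdef
  have v0 : v ≠ 0 := (Metric.measure_ball_pos _ _ (by positivity)).ne'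
  obtain ⟨N, hN⟩ : ∃ N : ℕ, volume K / v < N :=
    ENNReal.exists_nat_gt (ENNReal.div_ne_top hv v0)
  have hvt : v ≠ ⊤ := measure_ball_lt_top.ne
  rw [ENNReal.div_lt_iff (Or.inl v0) (Or.inl hvt)] at hN
  have N0 : 0 < N := by
    rcases Nat.eq_zero_or_pos N with h | h
    · simp [h] at hN
    · exact h
  have NR : (0 : ℝ) < N := by exact_mod_cast N0
  apply (Metric.isBounded_ball (x := x0) (r := 2 * N * r)).subset
  intro x hx
  by_contra hfar
  rw [Metric.mem_ball, not_lt, dist_eq_norm] at hfar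
  let c : ℕ → EuclideanSpace ℝ (Fin n) := fun i => x0 + ((i : ℝ) / (2 * N)) • (x - x0)
  have hvol : ∀ i, volume (Metric.ball (c i) (r / 2)) = v := fun i => by
    rw [Measure.addHaar_ball_center]
  have hdisj : Set.PairwiseDisjoint (↑(Finset.range N)) (fun i => Metric.ball (c i) (r / 2)) := by
    intro i _ j _ hij
    apply Metric.ball_disjoint_ball
    rw [dist_eq_norm]
    have e : c i - c j = (((i : ℝ) - j) / (2 * N)) • (x - x0) := by
      simp only [c]
      rw [add_sub_add_left_eq_sub, ← sub_smul]; congr 1; ring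
    rw [e, norm_smul, Real.norm_eq_abs, abs_div, abs_of_pos (by positivity : (0:ℝ) < 2 * N)]
    have h1 : (1 : ℝ) ≤ |(i : ℝ) - j| := by
      have : (1 : ℤ) ≤ |(i : ℤ) - j| := Int.one_le_abs (by intro h; apply hij; omega)
      exact_mod_cast this
    calc r / 2 + r / 2 = 1 / (2 * N) * (2 * N * r) := by field_simp; ring
      _ ≤ |(i : ℝ) - j| / (2 * N) * ‖x - x0‖ := by gcongr
  have hsub : (⋃ i ∈ Finset.range N, Metric.ball (c i) (r / 2)) ⊆ K := by
    intro z hz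
    simp only [Set.mem_iUnion] at hz
    obtain ⟨i, hi, hz⟩ := hz
    have hiN : (i : ℝ) ≤ N := by exact_mod_cast (Finset.mem_range.1 hi).le
    set s : ℝ := (i : ℝ) / (2 * N) with hs
    have s0 : 0 ≤ s := by positivity
    have s1 : s ≤ 1 / 2 := by rw [hs, div_le_iff₀ (by positivity)]; linarith
    have hs1 : 0 < 1 - s := by linarith
    have hw : x0 + (1 - s)⁻¹ • (z - c i) ∈ K := by
      apply hb
      rw [Metric.mem_ball, dist_eq_norm, add_sub_cancel_left, norm_smul, norm_inv, Real.norm_eq_abs,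
        abs_of_pos hs1, inv_mul_lt_iff₀ hs1]
      rw [Metric.mem_ball, dist_eq_norm] at hz
      nlinarith
    have := hK hx hw s0 hs1.le (by ring)
    convert this using 1
    rw [smul_add, smul_inv_smul₀ hs1.ne']
    simp only [c, ← hs]
    module
  have hle := measure_mono (μ := volume) hsub
  rw [measure_biUnion_finset hdisj (fun i _ => measurableSet_ball)] at hle
  simp only [hvol, Finset.sum_const, Finset.card_range, nsmul_eq_mul] at hle
  exact absurd hN (not_lt.2 hle)

lemma bdd {n : ℕ} {α : ℝ} (hα : α < 0) {f : EuclideanSpace ℝ (Fin n) → ℝ}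
    (hf : f ∈ CAlpha n α) (hfi : Integrable f) (hpos : 0 < ∫ x, f x) : ∃ C, ∀ x, f x ≤ C := by
  obtain ⟨f0, husc, -, hc⟩ := hf
  have hcv := convexOn_pow hα f0 hc
  have hne : (interior {x | f x ≠ 0}).Nonempty := by
    by_contra hempty
    rw [Set.not_nonempty_iff_eq_empty] at hempty
    have hz : volume {x | f x ≠ 0} = 0 := by
      refine measure_mono_null ?_ (hc.1.addHaar_frontier volume)
      rw [frontier, hempty, Set.sdiff_empty]
      exact subset_closure
    have : ∫ x, f x = 0 := integral_eq_zero_of_ae (by rw [Filter.EventuallyEq, ae_iff]; exact hz)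
    linarith
  obtain ⟨x0, hx0⟩ := hne
  have p0 : 0 < f x0 := lt_of_le_of_ne (f0 x0) (Ne.symm (interior_subset hx0))
  set t := f x0 / 2 with ht
  have t0 : 0 < t := by positivity
  have hca : ContinuousAt f x0 := (contOn hα f0 hc).continuousAt (isOpen_interior.mem_nhds hx0)
  have hev : ∀ᶠ x in 𝓝 x0, t ≤ f x :=
    (hca.eventually (lt_mem_nhds (show t < f x0 by linarith))).mono fun x hx => le_of_lt hx
  obtain ⟨r, hr, hball⟩ := Metric.eventually_nhds_iff_ball.1 hev
  have hKc : Convex ℝ {x | t ≤ f x} := by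
    have h1 := hcv.convex_le (t ^ α)
    convert h1 using 1
    ext x
    simp only [Set.mem_ofPred_eq]
    constructor
    · intro h
      exact ⟨(lt_of_lt_of_le t0 h).ne', Real.rpow_le_rpow_of_nonpos t0 h hα.le⟩
    · rintro ⟨h, h'⟩
      exact (Real.rpow_le_rpow_iff_of_neg (lt_of_le_of_ne (f0 x) (Ne.symm h)) t0 hα).1 h'
  have hKb := bounded_of_finite hKc hr hball (hfi.measure_ge_lt_top t0).ne
  have hKcl : IsClosed {x | t ≤ f x} := husc.isClosed_preimage t
  have hcomp := Metric.isCompact_of_isClosed_isBounded hKcl hKb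
  obtain ⟨C, hC⟩ := (husc.upperSemicontinuousOn {x | t ≤ f x}).bddAbove_of_isCompact hcomp
  refine ⟨max C t, fun x => ?_⟩
  by_cases hx : t ≤ f x
  · exact le_max_of_le_left (hC ⟨x, hx, rfl⟩)
  · exact le_max_of_le_right (not_le.1 hx).le

lemma bbl_euclid {a b : ℝ} (ha : 0 < a) (hb : 0 < b) (n : ℕ) (p : ℝ) (hp1 : 0 < 1 + n * p)
    (hp : p < 0) (f g h : EuclideanSpace ℝ (Fin n) → ℝ≥0∞) (hf : Measurable f)
    (hg : Measurable g) (hh : Measurable h)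
    (H : ∀ x y, M a b p (f x) (g y) ≤ h (a • x + b • y)) :
    M a b (p / (1 + n * p)) (∫⁻ x, f x) (∫⁻ x, g x) ≤ ∫⁻ x, h x := by
  have mp := PiLp.volume_preserving_toLp (Fin n)
  rw [← mp.lintegral_comp hf, ← mp.lintegral_comp hg, ← mp.lintegral_comp hh]
  refine bbl ha hb n p hp1 hp _ _ _ (hf.comp mp.measurable) (hg.comp mp.measurable)
    (hh.comp mp.measurable) ?_
  intro x y
  exact H (WithLp.toLp 2 x) (WithLp.toLp 2 y)

end BBL

theorem stmt_11 {n : ℕ} (hn : 1 ≤ n) (α κ : ℝ) (hα1 : -1 / (n : ℝ) < α) (hα2 : α < 0)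
    (hκ : κ = α / (1 + n * α)) (l : ℝ) (hl0 : 0 < l) (hl1 : l < 1)
    (f g : EuclideanSpace ℝ (Fin n) → ℝ) (hf : f ∈ CAlpha n α) (hg : g ∈ CAlpha n α)
    (hfi : Integrable f) (hgi : Integrable g)
    (hf0 : 0 < ∫ x, f x) (hg0 : 0 < ∫ x, g x)
    (h : EuclideanSpace ℝ (Fin n) → ℝ)
    (hdef : ∀ x, h x = ⨆ y : EuclideanSpace ℝ (Fin n),
      alphaMean α l (f (l⁻¹ • y)) (g ((1 - l)⁻¹ • (x - y)))) :
    ENNReal.ofReal ((l * (∫ x, f x) ^ κ + (1 - l) * (∫ x, g x) ^ κ) ^ (1 / κ)) ≤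
      ∫⁻ x, ENNReal.ofReal (h x) := by
  obtain ⟨C, hC⟩ := BBL.bdd hα2 hf hfi hf0
  obtain ⟨f0, fusc, -, fc⟩ := hf
  obtain ⟨g0, gusc, -, gc⟩ := hg
  have hl1' : 0 < 1 - l := by linarith
  have nR : (0 : ℝ) < n := by exact_mod_cast hn
  have hp1 : 0 < 1 + n * α := by
    rw [div_lt_iff₀ nR] at hα1
    linarith
  have hκ0 : κ < 0 := by rw [hκ]; exact div_neg_of_neg_of_pos hα2 hp1
  set U := interior {x | g x ≠ 0} with hU
  set F : EuclideanSpace ℝ (Fin n) → ℝ≥0∞ := fun x => ENNReal.ofReal (f x) with hF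
  set G : EuclideanSpace ℝ (Fin n) → ℝ≥0∞ := U.indicator fun x => ENNReal.ofReal (g x) with hG
  set Φ : EuclideanSpace ℝ (Fin n) → ℝ≥0∞ := fun x => ⨆ y : EuclideanSpace ℝ (Fin n),
    BBL.M l (1 - l) α (F (l⁻¹ • y)) (G ((1 - l)⁻¹ • (x - y))) with hΦ
  have mF : Measurable F := fusc.measurable.ennreal_ofReal
  have lG : LowerSemicontinuous G := by
    intro x
    by_cases hx : x ∈ U
    · have hc : ContinuousAt G x := by
        have h1 : ContinuousAt (fun x => ENNReal.ofReal (g x)) x :=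
          ENNReal.continuous_ofReal.continuousAt.comp
            ((BBL.contOn hα2 g0 gc).continuousAt (isOpen_interior.mem_nhds hx))
        refine h1.congr ?_
        filter_upwards [isOpen_interior.mem_nhds hx] with z hz
        rw [hG, Set.indicator_of_mem hz]
      exact hc.lowerSemicontinuousAt
    · intro y hy
      rw [hG, Set.indicator_of_notMem hx] at hy
      exact absurd hy not_lt_zero
  have mΦ : Measurable Φ := by
    apply LowerSemicontinuous.measurable
    apply lowerSemicontinuous_iSup
    intro y
    have c1 : LowerSemicontinuous fun x => G ((1 - l)⁻¹ • (x - y)) :=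
      lG.comp (by fun_prop : Continuous fun x => (1 - l)⁻¹ • (x - y))
    have c2 : Continuous fun v => BBL.M l (1 - l) α (F (l⁻¹ • y)) v :=
      (BBL.M_cont l (1 - l) α).comp (by fun_prop : Continuous fun v => (F (l⁻¹ • y), v))
    exact c2.comp_lowerSemicontinuous c1 fun u v huv => BBL.M_mono hα2 le_rfl huv
  have key := BBL.bbl_euclid hl0 hl1' n α hp1 hα2 F G Φ mF lG.measurable mΦ (by
    intro x y
    have : (1 - l)⁻¹ • (l • x + (1 - l) • y - l • x) = y := by
      rw [add_sub_cancel_left, inv_smul_smul₀ hl1'.ne']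
    refine le_trans (le_of_eq ?_) (le_iSup _ (l • x))
    rw [this, inv_smul_smul₀ hl0.ne'])
  have iG : ∫⁻ x, G x = ENNReal.ofReal (∫ x, g x) := by
    rw [ofReal_integral_eq_lintegral_ofReal hgi (Eventually.of_forall g0)]
    apply lintegral_congr_ae
    have hz := gc.1.addHaar_frontier volume
    filter_upwards [measure_eq_zero_iff_ae_notMem.1 hz] with x hx
    by_cases hxU : x ∈ U
    · rw [hG, Set.indicator_of_mem hxU]
    · rw [hG, Set.indicator_of_notMem hxU]
      by_contra hne
      apply hx
      have : g x ≠ 0 := fun h0 => hne (by simp [h0])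
      exact ⟨subset_closure this, hxU⟩
  rw [iG, ← ofReal_integral_eq_lintegral_ofReal hfi (Eventually.of_forall f0), ← hκ,
    BBL.M_ofReal hl0 hl1' hf0 hg0] at key
  refine key.trans (lintegral_mono fun x => ?_)
  refine iSup_le fun y => ?_
  have mean : ∀ u v : ℝ, 0 ≤ u → 0 ≤ v → BBL.M l (1 - l) α (ENNReal.ofReal u) (ENNReal.ofReal v) =
      ENNReal.ofReal (alphaMean α l u v) := by
    intro u v hu hv
    unfold alphaMean
    split_ifs with hz
    · rcases hz with rfl | rfl
      · rw [ENNReal.ofReal_zero, BBL.M_zero_left hl0 hα2]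
      · rw [ENNReal.ofReal_zero, BBL.M_zero_right hl1' hα2]
    · push Not at hz
      exact BBL.M_ofReal hl0 hl1' (lt_of_le_of_ne hu hz.1.symm) (lt_of_le_of_ne hv hz.2.symm)
  have bound : ∀ u v : ℝ, 0 ≤ u → 0 ≤ v → alphaMean α l u v ≤ l ^ (1 / α) * u := by
    intro u v hu hv
    unfold alphaMean
    split_ifs with hz
    · positivity
    · push Not at hz
      have u0 := lt_of_le_of_ne hu hz.1.symm
      have v0 := lt_of_le_of_ne hv hz.2.symm
      calc (l * u ^ α + (1 - l) * v ^ α) ^ (1 / α) ≤ (l * u ^ α) ^ (1 / α) := by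
            apply Real.rpow_le_rpow_of_nonpos (by positivity)
            · have : 0 ≤ (1 - l) * v ^ α := by positivity
              linarith
            · rw [one_div]; exact inv_nonpos.2 hα2.le
        _ = l ^ (1 / α) * u := by
            rw [Real.mul_rpow hl0.le (by positivity), ← Real.rpow_mul hu,
              mul_one_div_cancel hα2.ne, Real.rpow_one]
  calc BBL.M l (1 - l) α (F (l⁻¹ • y)) (G ((1 - l)⁻¹ • (x - y)))
      ≤ BBL.M l (1 - l) α (ENNReal.ofReal (f (l⁻¹ • y)))
        (ENNReal.ofReal (g ((1 - l)⁻¹ • (x - y)))) :=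
        BBL.M_mono hα2 le_rfl (Set.indicator_le_self _ _ _)
    _ = ENNReal.ofReal (alphaMean α l (f (l⁻¹ • y)) (g ((1 - l)⁻¹ • (x - y)))) :=
        mean _ _ (f0 _) (g0 _)
    _ ≤ ENNReal.ofReal (h x) := by
        apply ENNReal.ofReal_le_ofReal
        rw [hdef]
        refine le_ciSup (f := fun y => alphaMean α l (f (l⁻¹ • y)) (g ((1 - l)⁻¹ • (x - y)))) ?_ y
        refine ⟨l ^ (1 / α) * C, ?_⟩
        rintro _ ⟨z, rfl⟩
        refine (bound _ _ (f0 _) (g0 _)).trans ?_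
        have := hC (l⁻¹ • z)
        gcongr
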